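/- Let 𝒞₁, 𝒞₂, 𝒞₃ > 0 and define the white dwarf pressure P(ρ) = 𝒞₁ ∫₀^{𝒞₂ ρ^{1/3}} s⁴/√(𝒞₃ + s²) ds for ρ ≥ 0. Then P is infinitely differentiable on (0,∞) with P'(ρ) = (𝒞₁𝒞₂⁵/3) ρ^{2/3} (𝒞₃ + 𝒞₂² ρ^{2/3})^{−1/2} > 0 and 2P'(ρ) + ρ P''(ρ) > 0 for all ρ > 0, and moreover lim_{ρ→0⁺} P(ρ)/ρ^{5/3} = 𝒞₁𝒞₂⁵/(5√𝒞₃) and lim_{ρ→∞} P(ρ)/ρ^{4/3} = 𝒞₁𝒞₂⁴/4. -/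

import Mathlib

open Set MeasureTheory Filter
open Topology

/-!
The pressure is `P ρ = C₁ * F (C₂ * ρ ^ (1 / 3))`, where `F x` is the integral of
`f s = s ^ 4 / √(C₃ + s ^ 2)` over `[0, x]`, so smoothness and the formula for `P'` come from the
fundamental theorem of calculus. In terms of `u = ρ ^ (2 / 3)`, `P'` is a positive multiple of
`u / √(C₃ + C₂ ^ 2 * u)`, which increases with `u`: thus `P'' ≥ 0`, and `2 * P' + ρ * P''` is
positive because `P'` is. For the two limits, rescaling gives
`F x / x ^ (p + 1) = ∫ t in 0..1, f (t * x) / x ^ p`. Since `f s ≤ s ^ 4 / √C₃` and `f s ≤ s ^ 3`,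
dominated convergence applies with `p = 4` as `x → 0` and with `p = 3` as `x → ∞`.
-/

section Calculus

variable {E : Type*} [NormedAddCommGroup E] [NormedSpace ℝ E]

lemma contDiff_add_one_intervalIntegral [CompleteSpace E] {n : ℕ∞} {f : ℝ → E}
    (hf : ContDiff ℝ n f) (a : ℝ) : ContDiff ℝ (n + 1) fun x ↦ ∫ s in a..x, f s := by
  have hderiv : deriv (fun x ↦ ∫ s in a..x, f s) = f :=
    funext fun x ↦ hf.continuous.deriv_integral f a x
  rw [contDiff_succ_iff_deriv, hderiv]
  refine ⟨fun x ↦ ?_, by simp, hf⟩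
  exact (hf.continuous.integral_hasStrictDerivAt a x).hasDerivAt.differentiableAt

lemma rpow_add_one_inv_smul_integral {x : ℝ} (hx : x ≠ 0) (f : ℝ → E) (p : ℝ) :
    (x ^ (p + 1))⁻¹ • ∫ s in (0:ℝ)..x, f s = ∫ t in (0:ℝ)..1, (x ^ p)⁻¹ • f (t * x) := by
  have hrescale : ∫ s in (0:ℝ)..x, f s = x • ∫ t in (0:ℝ)..1, f (t * x) := by
    simp only [intervalIntegral.smul_integral_comp_mul_right, zero_mul, one_mul]
  rw [intervalIntegral.integral_smul, hrescale, smul_smul, Real.rpow_add_one hx, mul_inv,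
    inv_mul_cancel_right₀ hx]

lemma rpow_smul_mul_rpow_inv_smul {t x : ℝ} (ht : 0 < t) (hx : 0 ≤ x) (p : ℝ) (v : E) :
    t ^ p • ((t * x) ^ p)⁻¹ • v = (x ^ p)⁻¹ • v := by
  rw [smul_smul, Real.mul_rpow ht.le hx, mul_inv,
    mul_inv_cancel_left₀ (Real.rpow_pos_of_pos ht p).ne']

lemma tendsto_rpow_inv_smul_integral [CompleteSpace E] {l : Filter ℝ} [l.IsCountablyGenerated]
    {f : ℝ → E} {L : E} {K p : ℝ} (hpos : ∀ᶠ x in l, 0 < x)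
    (hscale : ∀ t, 0 < t → Tendsto (fun x ↦ t * x) l l) (hp : -1 < p)
    (hmeas : StronglyMeasurable f) (hbound : ∀ s, 0 < s → ‖f s‖ ≤ K * s ^ p)
    (hlim : Tendsto (fun s ↦ (s ^ p)⁻¹ • f s) l (𝓝 L)) :
    Tendsto (fun x ↦ (x ^ (p + 1))⁻¹ • ∫ s in (0:ℝ)..x, f s) l (𝓝 ((p + 1)⁻¹ • L)) := by
  have hunit {t : ℝ} (ht : t ∈ uIoc (0:ℝ) 1) : 0 < t := by
    rw [uIoc_of_le zero_le_one] at ht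
    exact ht.1
  have hlimit : ∫ t in (0:ℝ)..1, t ^ p • L = (p + 1)⁻¹ • L := by
    rw [intervalIntegral.integral_smul_const, integral_rpow (.inl hp), Real.one_rpow,
      Real.zero_rpow (by linarith), sub_zero, one_div]
  rw [← hlimit]
  refine Tendsto.congr'
    (hpos.mono fun x hx ↦ (rpow_add_one_inv_smul_integral hx.ne' f p).symm) ?_
  refine intervalIntegral.tendsto_integral_filter_of_dominated_convergence
    (fun t ↦ K * t ^ p) ?_ ?_ ((intervalIntegral.intervalIntegrable_rpow' hp).const_mul K) ?_
  · exact .of_forall fun x ↦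
      ((hmeas.comp_measurable (measurable_mul_const x)).const_smul _).aestronglyMeasurable
  · filter_upwards [hpos] with x hx
    refine .of_forall fun t ht ↦ ?_
    have hxp : 0 < x ^ p := Real.rpow_pos_of_pos hx p
    rw [norm_smul, norm_inv, Real.norm_of_nonneg hxp.le, inv_mul_le_iff₀ hxp]
    calc ‖f (t * x)‖ ≤ K * (t * x) ^ p := hbound _ (mul_pos (hunit ht) hx)
      _ = x ^ p * (K * t ^ p) := by rw [Real.mul_rpow (hunit ht).le hx.le]; ring
  · refine .of_forall fun t ht ↦ ?_
    refine ((hlim.comp (hscale t (hunit ht))).const_smul (t ^ p)).congr' ?_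
    filter_upwards [hpos] with x hx
    exact rpow_smul_mul_rpow_inv_smul (hunit ht) hx.le p _

lemma tendsto_integral_div_pow {l : Filter ℝ} [l.IsCountablyGenerated] {f : ℝ → ℝ} {K L : ℝ}
    {n : ℕ} (hpos : ∀ᶠ x in l, 0 < x) (hscale : ∀ t, 0 < t → Tendsto (fun x ↦ t * x) l l)
    (hmeas : StronglyMeasurable f) (hbound : ∀ s, 0 < s → |f s| ≤ K * s ^ n)
    (hlim : Tendsto (fun s ↦ f s / s ^ n) l (𝓝 L)) :
    Tendsto (fun x ↦ (∫ s in (0:ℝ)..x, f s) / x ^ (n + 1)) l (𝓝 (L / (n + 1))) := by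
  have hn : (-1 : ℝ) < n := neg_one_lt_zero.trans_le n.cast_nonneg
  simpa only [Real.rpow_natCast, ← Nat.cast_add_one, smul_eq_mul, ← div_eq_inv_mul] using
    tendsto_rpow_inv_smul_integral hpos hscale hn hmeas
      (by simpa only [Real.rpow_natCast, Real.norm_eq_abs] using hbound)
      (by simpa only [Real.rpow_natCast, smul_eq_mul, ← div_eq_inv_mul] using hlim)

end Calculus

lemma tendsto_rpow_nhdsGT_zero {p : ℝ} (hp : 0 < p) :
    Tendsto (fun x : ℝ ↦ x ^ p) (𝓝[>] 0) (𝓝[>] 0) := by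
  refine tendsto_nhdsWithin_iff.2 ⟨?_, ?_⟩
  · have hcont := Real.continuousAt_rpow_const 0 p (.inr hp.le)
    rw [ContinuousAt, Real.zero_rpow hp.ne'] at hcont
    exact hcont.mono_left nhdsWithin_le_nhds
  · exact eventually_mem_nhdsWithin.mono fun x hx ↦ Real.rpow_pos_of_pos hx p

lemma monotoneOn_mul_add_mul_rpow_neg {a b q : ℝ} (ha : 0 < a) (hb : 0 ≤ b) (hq₀ : 0 ≤ q)
    (hq₁ : q ≤ 1) : MonotoneOn (fun u : ℝ ↦ u * (a + b * u) ^ (-q)) (Ioi 0) := by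
  have hsplit {w : ℝ} (hw : 0 < w) :
      w * (a + b * w) ^ (-q) = w ^ (1 - q) * (w / (a + b * w)) ^ q := by
    rw [Real.div_rpow hw.le (by positivity), Real.rpow_sub hw, Real.rpow_one,
      Real.rpow_neg (by positivity)]
    field_simp
  intro u (hu : 0 < u) v (hv : 0 < v) huv
  have hquot : u / (a + b * u) ≤ v / (a + b * v) := by
    rw [div_le_div_iff₀ (by positivity) (by positivity)]
    nlinarith
  have : 0 ≤ 1 - q := sub_nonneg.2 hq₁
  simp only [hsplit hu, hsplit hv]
  gcongr

/-- The integrand of the equation of state of a degenerate electron gas; `s` is the momentum. -/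
noncomputable def fermiIntegrand (C s : ℝ) : ℝ := s ^ 4 / √(C + s ^ 2)

/-- The pressure of a degenerate electron gas with Fermi momentum `x`, up to a constant factor.
Only its values at `0 ≤ x` are meaningful. -/
noncomputable def fermiIntegral (C x : ℝ) : ℝ := ∫ s in (0:ℝ)..x, fermiIntegrand C s

section FermiIntegral

variable {C : ℝ}

lemma contDiff_fermiIntegrand (hC : 0 < C) {n : WithTop ℕ∞} : ContDiff ℝ n (fermiIntegrand C) := by
  refine ContDiff.div (by fun_prop) (ContDiff.sqrt (by fun_prop) fun s ↦ ?_) fun s ↦ ?_ <;>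
  positivity

lemma fermiIntegrand_nonneg (C s : ℝ) : 0 ≤ fermiIntegrand C s := by
  unfold fermiIntegrand
  positivity

lemma fermiIntegrand_le_pow_four (hC : 0 < C) (s : ℝ) : fermiIntegrand C s ≤ (√C)⁻¹ * s ^ 4 := by
  rw [fermiIntegrand, div_eq_inv_mul]
  gcongr
  exact le_add_of_nonneg_right (sq_nonneg s)

lemma fermiIntegrand_le_pow_three (hC : 0 ≤ C) {s : ℝ} (hs : 0 < s) :
    fermiIntegrand C s ≤ s ^ 3 := by
  have hsqrt : s ≤ √(C + s ^ 2) := Real.le_sqrt_of_sq_le (le_add_of_nonneg_left hC)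
  calc s ^ 4 / √(C + s ^ 2) ≤ s ^ 4 / s := by gcongr
    _ = s ^ 3 := by field_simp

lemma tendsto_fermiIntegrand_div_pow_four (hC : 0 < C) :
    Tendsto (fun s ↦ fermiIntegrand C s / s ^ 4) (𝓝[>] 0) (𝓝 (√C)⁻¹) := by
  have hcont : ContinuousAt (fun s : ℝ ↦ (√(C + s ^ 2))⁻¹) 0 :=
    ContinuousAt.inv₀ (by fun_prop) (by positivity)
  have hlim : Tendsto (fun s : ℝ ↦ (√(C + s ^ 2))⁻¹) (𝓝[>] 0) (𝓝 (√C)⁻¹) := by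
    simpa [ContinuousAt] using hcont.mono_left nhdsWithin_le_nhds
  refine hlim.congr' (eventually_mem_nhdsWithin.mono fun s (hs : 0 < s) ↦ ?_)
  simp only [fermiIntegrand]
  field_simp

lemma tendsto_fermiIntegrand_div_pow_three (C : ℝ) :
    Tendsto (fun s ↦ fermiIntegrand C s / s ^ 3) atTop (𝓝 1) := by
  have hdiv : Tendsto (fun s : ℝ ↦ C / s ^ 2 + 1) atTop (𝓝 1) := by
    simpa using (tendsto_const_nhds.div_atTop (tendsto_pow_atTop two_ne_zero)).add_const (1 : ℝ)
  have hlim : Tendsto (fun s : ℝ ↦ (√(C / s ^ 2 + 1))⁻¹) atTop (𝓝 1) := by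
    simpa using hdiv.sqrt.inv₀ (by simp)
  refine hlim.congr' ((eventually_gt_atTop 0).mono fun s hs ↦ ?_)
  have hsqrt : √(C + s ^ 2) = √(C / s ^ 2 + 1) * s := by
    rw [← Real.sqrt_sq hs.le, ← Real.sqrt_mul' _ (sq_nonneg s), Real.sqrt_sq hs.le]
    field_simp
  simp only [fermiIntegrand, hsqrt]
  field_simp

lemma contDiff_fermiIntegral (hC : 0 < C) (n : ℕ∞) : ContDiff ℝ n (fermiIntegral C) :=
  (contDiff_add_one_intervalIntegral (contDiff_fermiIntegrand hC) 0).of_le le_self_add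

lemma hasDerivAt_fermiIntegral (hC : 0 < C) (x : ℝ) :
    HasDerivAt (fermiIntegral C) (fermiIntegrand C x) x :=
  ((contDiff_fermiIntegrand hC (n := 0)).continuous.integral_hasStrictDerivAt 0 x).hasDerivAt

lemma tendsto_fermiIntegral_div_pow_five (hC : 0 < C) :
    Tendsto (fun x ↦ fermiIntegral C x / x ^ 5) (𝓝[>] 0) (𝓝 (1 / (5 * √C))) := by
  have hbound (s : ℝ) (_ : 0 < s) : |fermiIntegrand C s| ≤ (√C)⁻¹ * s ^ 4 :=
    (abs_of_nonneg (fermiIntegrand_nonneg C s)).trans_le (fermiIntegrand_le_pow_four hC s)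
  have hconst : (√C)⁻¹ / ((4:ℕ) + 1) = 1 / (5 * √C) := by
    field_simp
    norm_num
  rw [← hconst]
  exact tendsto_integral_div_pow eventually_mem_nhdsWithin
    (fun t ht ↦ tendsto_iff_comap.2 (comap_mulLeft_nhdsGT_zero ht).ge)
    (contDiff_fermiIntegrand hC (n := 0)).continuous.stronglyMeasurable hbound
    (tendsto_fermiIntegrand_div_pow_four hC)

lemma tendsto_fermiIntegral_div_pow_four (hC : 0 < C) :
    Tendsto (fun x ↦ fermiIntegral C x / x ^ 4) atTop (𝓝 (1 / 4)) := by
  have hbound (s : ℝ) (hs : 0 < s) : |fermiIntegrand C s| ≤ 1 * s ^ 3 := by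
    rw [abs_of_nonneg (fermiIntegrand_nonneg C s), one_mul]
    exact fermiIntegrand_le_pow_three hC.le hs
  have hconst : (1:ℝ) / ((3:ℕ) + 1) = 1 / 4 := by norm_num
  rw [← hconst]
  exact tendsto_integral_div_pow (eventually_gt_atTop 0)
    (fun t ht ↦ tendsto_id.const_mul_atTop ht)
    (contDiff_fermiIntegrand hC (n := 0)).continuous.stronglyMeasurable hbound
    (tendsto_fermiIntegrand_div_pow_three C)

end FermiIntegral

/-- The white dwarf pressure `P` as a function of the density `ρ`; `C₂ * ρ ^ (1 / 3)` is the Fermi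
momentum. Only its values at `0 ≤ ρ` are meaningful. -/
noncomputable def whiteDwarfPressure (C₁ C₂ C₃ ρ : ℝ) : ℝ :=
  C₁ * fermiIntegral C₃ (C₂ * ρ ^ ((1:ℝ) / 3))

section WhiteDwarfPressure

variable {C₁ C₂ C₃ ρ : ℝ}

lemma mul_rpow_one_third_pow (hρ : 0 ≤ ρ) (c : ℝ) (n : ℕ) :
    (c * ρ ^ ((1:ℝ) / 3)) ^ n = c ^ n * ρ ^ ((n:ℝ) / 3) := by
  rw [mul_pow, ← Real.rpow_mul_natCast hρ, one_div_mul_eq_div]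

lemma contDiffOn_whiteDwarfPressure (C₁ C₂ : ℝ) (hC₃ : 0 < C₃) (n : ℕ∞) :
    ContDiffOn ℝ n (whiteDwarfPressure C₁ C₂ C₃) (Ioi 0) :=
  contDiffOn_const.mul <| (contDiff_fermiIntegral hC₃ n).comp_contDiffOn <|
    contDiffOn_const.mul <| contDiffOn_id.rpow_const_of_ne fun _ hρ ↦ ne_of_gt hρ

lemma deriv_whiteDwarfPressure (C₁ C₂ : ℝ) (hC₃ : 0 < C₃) (hρ : 0 < ρ) :
    deriv (whiteDwarfPressure C₁ C₂ C₃) ρ =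
      C₁ * C₂ ^ 5 / 3 * ρ ^ ((2:ℝ) / 3) * (C₃ + C₂ ^ 2 * ρ ^ ((2:ℝ) / 3)) ^ (-(1:ℝ) / 2) := by
  have hmomentum : HasDerivAt (fun ρ : ℝ ↦ C₂ * ρ ^ ((1:ℝ) / 3))
      (C₂ * (1 / 3 * ρ ^ ((1:ℝ) / 3 - 1))) ρ :=
    (Real.hasDerivAt_rpow_const (.inl hρ.ne')).const_mul C₂
  have hchain : deriv (whiteDwarfPressure C₁ C₂ C₃) ρ =
      C₁ * (fermiIntegrand C₃ (C₂ * ρ ^ ((1:ℝ) / 3)) * (C₂ * (1 / 3 * ρ ^ ((1:ℝ) / 3 - 1)))) :=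
    (((hasDerivAt_fermiIntegral hC₃ _).comp ρ hmomentum).const_mul C₁).deriv
  have hexp : ρ ^ ((4:ℝ) / 3) * ρ ^ ((1:ℝ) / 3 - 1) = ρ ^ ((2:ℝ) / 3) := by
    rw [← Real.rpow_add hρ]
    norm_num
  rw [hchain, fermiIntegrand, mul_rpow_one_third_pow hρ.le, mul_rpow_one_third_pow hρ.le,
    neg_div, Real.rpow_neg (by positivity), ← Real.sqrt_eq_rpow, Nat.cast_ofNat, Nat.cast_ofNat,
    ← hexp]
  ring

lemma deriv_whiteDwarfPressure_pos (hC₁ : 0 < C₁) (hC₂ : 0 < C₂) (hC₃ : 0 < C₃) (hρ : 0 < ρ) :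
    0 < deriv (whiteDwarfPressure C₁ C₂ C₃) ρ := by
  rw [deriv_whiteDwarfPressure C₁ C₂ hC₃ hρ]
  positivity

lemma monotoneOn_deriv_whiteDwarfPressure (hC₁ : 0 ≤ C₁) (hC₂ : 0 ≤ C₂) (hC₃ : 0 < C₃) :
    MonotoneOn (deriv (whiteDwarfPressure C₁ C₂ C₃)) (Ioi 0) := by
  intro ρ (hρ : 0 < ρ) σ (hσ : 0 < σ) hρσ
  have hpow : ρ ^ ((2:ℝ) / 3) ≤ σ ^ ((2:ℝ) / 3) := by gcongr
  have hmono := monotoneOn_mul_add_mul_rpow_neg hC₃ (sq_nonneg C₂) (q := 1 / 2) (by norm_num)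
    (by norm_num) (Real.rpow_pos_of_pos hρ _) (Real.rpow_pos_of_pos hσ _) hpow
  rw [deriv_whiteDwarfPressure C₁ C₂ hC₃ hρ, deriv_whiteDwarfPressure C₁ C₂ hC₃ hσ, mul_assoc,
    mul_assoc _ (σ ^ _), neg_div]
  gcongr

lemma deriv_deriv_whiteDwarfPressure_nonneg (hC₁ : 0 ≤ C₁) (hC₂ : 0 ≤ C₂) (hC₃ : 0 < C₃)
    (hρ : 0 < ρ) : 0 ≤ deriv (deriv (whiteDwarfPressure C₁ C₂ C₃)) ρ := by
  rw [← derivWithin_of_isOpen isOpen_Ioi hρ]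
  exact (monotoneOn_deriv_whiteDwarfPressure hC₁ hC₂ hC₃).derivWithin_nonneg

lemma whiteDwarfPressure_div_rpow (hC₂ : C₂ ≠ 0) (hρ : 0 ≤ ρ) (n : ℕ) :
    whiteDwarfPressure C₁ C₂ C₃ ρ / ρ ^ ((n:ℝ) / 3) = C₁ * C₂ ^ n *
      (fermiIntegral C₃ (C₂ * ρ ^ ((1:ℝ) / 3)) / (C₂ * ρ ^ ((1:ℝ) / 3)) ^ n) := by
  rw [mul_rpow_one_third_pow hρ, whiteDwarfPressure]
  field_simp

lemma tendsto_whiteDwarfPressure_div_rpow_five_thirds (C₁ : ℝ) (hC₂ : 0 < C₂) (hC₃ : 0 < C₃) :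
    Tendsto (fun ρ ↦ whiteDwarfPressure C₁ C₂ C₃ ρ / ρ ^ ((5:ℝ) / 3)) (𝓝[>] 0)
      (𝓝 (C₁ * C₂ ^ 5 / (5 * √C₃))) := by
  have hmomentum : Tendsto (fun ρ : ℝ ↦ C₂ * ρ ^ ((1:ℝ) / 3)) (𝓝[>] 0) (𝓝[>] 0) :=
    (tendsto_iff_comap.2 (comap_mulLeft_nhdsGT_zero hC₂).ge).comp
      (tendsto_rpow_nhdsGT_zero (by norm_num))
  have hlim := ((tendsto_fermiIntegral_div_pow_five hC₃).comp hmomentum).const_mul (C₁ * C₂ ^ 5)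
  rw [mul_one_div] at hlim
  exact hlim.congr' <| eventually_mem_nhdsWithin.mono fun ρ (hρ : 0 < ρ) ↦
    (whiteDwarfPressure_div_rpow hC₂.ne' hρ.le 5).symm

lemma tendsto_whiteDwarfPressure_div_rpow_four_thirds (C₁ : ℝ) (hC₂ : 0 < C₂) (hC₃ : 0 < C₃) :
    Tendsto (fun ρ ↦ whiteDwarfPressure C₁ C₂ C₃ ρ / ρ ^ ((4:ℝ) / 3)) atTop
      (𝓝 (C₁ * C₂ ^ 4 / 4)) := by
  have hmomentum : Tendsto (fun ρ : ℝ ↦ C₂ * ρ ^ ((1:ℝ) / 3)) atTop atTop :=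
    (tendsto_rpow_atTop (by norm_num)).const_mul_atTop hC₂
  have hlim := ((tendsto_fermiIntegral_div_pow_four hC₃).comp hmomentum).const_mul (C₁ * C₂ ^ 4)
  rw [mul_one_div] at hlim
  exact hlim.congr' <| (eventually_ge_atTop 0).mono fun ρ hρ ↦
    (whiteDwarfPressure_div_rpow hC₂.ne' hρ 4).symm

end WhiteDwarfPressure

theorem white_dwarf_pressure
    (C₁ C₂ C₃ : ℝ) (hC₁ : 0 < C₁) (hC₂ : 0 < C₂) (hC₃ : 0 < C₃)
    (P : ℝ → ℝ)
    (hP : ∀ ρ : ℝ, 0 ≤ ρ →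
      P ρ = C₁ * ∫ s in (0:ℝ)..(C₂ * ρ ^ ((1:ℝ)/3)), s ^ 4 / Real.sqrt (C₃ + s ^ 2)) :
    ContDiffOn ℝ (⊤ : ℕ∞) P (Ioi 0) ∧
    (∀ ρ : ℝ, 0 < ρ →
      deriv P ρ = C₁ * C₂ ^ 5 / 3 * ρ ^ ((2:ℝ)/3) * (C₃ + C₂ ^ 2 * ρ ^ ((2:ℝ)/3)) ^ (-(1:ℝ)/2) ∧
      0 < deriv P ρ ∧
      0 < 2 * deriv P ρ + ρ * deriv (deriv P) ρ) ∧
    Tendsto (fun ρ : ℝ => P ρ / ρ ^ ((5:ℝ)/3)) (nhdsWithin 0 (Ioi 0))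
      (nhds (C₁ * C₂ ^ 5 / (5 * Real.sqrt C₃))) ∧
    Tendsto (fun ρ : ℝ => P ρ / ρ ^ ((4:ℝ)/3)) atTop (nhds (C₁ * C₂ ^ 4 / 4)) := by
  have hPW : EqOn P (whiteDwarfPressure C₁ C₂ C₃) (Ioi 0) := fun ρ hρ ↦ hP ρ hρ.le
  have hderiv : EqOn (deriv P) (deriv (whiteDwarfPressure C₁ C₂ C₃)) (Ioi 0) :=
    hPW.deriv isOpen_Ioi
  have hderiv₂ := hderiv.deriv isOpen_Ioi
  refine ⟨(contDiffOn_whiteDwarfPressure C₁ C₂ hC₃ ⊤).congr hPW, fun ρ hρ ↦ ?_, ?_, ?_⟩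
  · rw [hderiv₂ hρ, hderiv hρ]
    have hpos := deriv_whiteDwarfPressure_pos hC₁ hC₂ hC₃ hρ
    have hconvex := deriv_deriv_whiteDwarfPressure_nonneg hC₁.le hC₂.le hC₃ hρ
    exact ⟨deriv_whiteDwarfPressure C₁ C₂ hC₃ hρ, hpos, by positivity⟩
  · refine (tendsto_whiteDwarfPressure_div_rpow_five_thirds C₁ hC₂ hC₃).congr' ?_
    exact eventually_mem_nhdsWithin.mono fun ρ hρ ↦ by simp only [hPW hρ]
  · refine (tendsto_whiteDwarfPressure_div_rpow_four_thirds C₁ hC₂ hC₃).congr' ?_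
    exact (eventually_gt_atTop 0).mono fun ρ hρ ↦ by simp only [hPW hρ]
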